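/- Let 𝕋 be a time scale with minimum t₀ = min 𝕋, let q₀ ∈ ℝⁿ, and let h: 𝕋\{sup 𝕋} → ℝ^{n×n} be μ_Δ-measurable and essentially bounded (h ∈ L^∞_𝕋(𝕋\{sup 𝕋},ℝ^{n×n})). Then the linear Δ-Cauchy problem q^Δ(t) = h(t)·q(t), q(t₀) = q₀, has a unique maximal solution, and this maximal solution is global, i.e. it is defined on all of 𝕋. -/

import Mathlib

/-!
The Cauchy problem on `T` is turned into an integral equation on the real half-line `[t₀, ∞)`. Let
`⌊s⌋` be the largest point of `T` that is `≤ s` (`tsFloor`), and let `K s = h ⌊s⌋` for `s ≥ t₀`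
below `sup T` and `K s = 0` elsewhere (`tsKernel`). The floor map pulls `μ_Δ`-null sets back to
Lebesgue null sets (`ae_tsFloor`), so `K` is measurable and essentially bounded by some `C ≥ 0`. A
function on `T` solves the Cauchy problem iff it satisfies
`q t = q₀ + ∫ s in t₀..t, K s (q ⌊s⌋)` on `T`: over a gap of `T` the integrand is constant, which
is the jump relation `q (σ t) = q t + μ(t) h t (q t)`, and at almost every right-dense point the
integral may be differentiated (`ae_hasDeltaDerivAt_tsPrimitive`).

*Existence.* The integral equation has a solution on `[t₀, ∞)` by the contraction principle, in the
norm weighted by `exp (-(2C + 1)(t - t₀))` (`exists_volterra`); the delay is harmless because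
`⌊s⌋ ≤ s`. The solution exists on all of `T` at once, so it is maximal.

*Uniqueness.* Let `w` be the difference of two solutions on `[t₀, b]` and `P` the primitive
`∫ s in t₀..t, K s (w ⌊s⌋)`. Then `w - P` is absolutely continuous on `T` with vanishing
`Δ`-derivative, hence constant (`eq_of_deltaDeriv_zero`). To see the latter, extend such a function
by a constant on each gap. As it takes equal values at both ends of a gap, the extension is
absolutely continuous on a real interval; its derivative exists a.e., and is `0` on gaps and at
right-dense points. Absolute continuity on `T` is defined with disjoint closed intervals, while the
real notion lets intervals touch: `DeltaAC.finset_Ioc` bridges the two by separating the intervals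
of even and odd rank. Thus `w = P` on `T`, and a weighted Gronwall argument
(`eq_zero_of_weighted`) gives `P = 0`. A maximal solution agrees with the global one on its
interval, which therefore extends it, so its interval is all of `T`.
-/

open MeasureTheory Set Filter Classical

noncomputable section
open scoped Classical

/-- The forward jump operator `σ` of a time scale `T`. -/
def tsSigma (T : Set ℝ) (t : ℝ) : ℝ :=
  if ({s | s ∈ T ∧ t < s}).Nonempty then sInf {s | s ∈ T ∧ t < s} else t

/-- The backward jump operator `ρ` of a time scale `T`. -/
def tsRho (T : Set ℝ) (t : ℝ) : ℝ :=
  if ({s | s ∈ T ∧ s < t}).Nonempty then sSup {s | s ∈ T ∧ s < t} else t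

/-- The graininess function `μ(t) = σ(t) - t`. -/
def tsGrain (T : Set ℝ) (t : ℝ) : ℝ := tsSigma T t - t

/-- `t` is a right-scattered point of `T`. -/
def RightScattered (T : Set ℝ) (t : ℝ) : Prop := t < tsSigma T t

/-- `t` is a right-dense point of `T`. -/
def RightDense (T : Set ℝ) (t : ℝ) : Prop := tsSigma T t = t

/-- `t` is a left-scattered point of `T`. -/
def LeftScattered (T : Set ℝ) (t : ℝ) : Prop := tsRho T t < t

/-- `t` is a left-dense point of `T`. -/
def LeftDense (T : Set ℝ) (t : ℝ) : Prop := tsRho T t = t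

/-- `𝕋 \ {sup 𝕋}`: the time scale minus its maximum (if the maximum exists). -/
def tsUpDomain (T : Set ℝ) : Set ℝ := {t | t ∈ T ∧ ¬ IsGreatest T t}

/-- The Lebesgue Δ-measure on the time scale `T`: Lebesgue measure restricted to `T`
plus `Σ_{r ∈ ℛ} μ(r)·δ_r` over right-scattered points `r`. -/
def deltaMeasure (T : Set ℝ) : Measure ℝ :=
  volume.restrict T +
    Measure.sum (fun r : {t : ℝ // t ∈ T ∧ RightScattered T t} =>
      ENNReal.ofReal (tsGrain T r.1) • Measure.dirac r.1)

/-- Δ-differentiability of `q` at `t`, with Δ-derivative `q'`. -/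
def HasDeltaDerivAt {n : ℕ} (T : Set ℝ) (q : ℝ → EuclideanSpace ℝ (Fin n))
    (q' : EuclideanSpace ℝ (Fin n)) (t : ℝ) : Prop :=
  ∀ ε > (0:ℝ), ∃ U ∈ nhds t, ∀ s ∈ U ∩ T,
    ‖q (tsSigma T t) - q s - (tsSigma T t - s) • q'‖ ≤ ε * |tsSigma T t - s|

/-- Absolute continuity of `q` on `[a,b]_𝕋`. -/
def DeltaAC {n : ℕ} (T : Set ℝ) (a b : ℝ) (q : ℝ → EuclideanSpace ℝ (Fin n)) : Prop :=
  ∀ ε > (0:ℝ), ∃ δ > (0:ℝ), ∀ (m : ℕ) (u v : ℕ → ℝ),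
    (∀ k < m, u k ∈ Icc a b ∩ T) → (∀ k < m, v k ∈ Icc a b ∩ T) →
    (∀ k < m, u k ≤ v k) →
    (∀ i < m, ∀ j < m, i ≠ j → Disjoint (Icc (u i) (v i)) (Icc (u j) (v j))) →
    (∑ k ∈ Finset.range m, (v k - u k)) < δ →
    (∑ k ∈ Finset.range m, ‖q (v k) - q (u k)‖) < ε

/-- `f` is a Δ-Carathéodory function on `Ω × 𝕋\{sup 𝕋}`. -/
def DeltaCaratheodory {n : ℕ} (T : Set ℝ) (Ω : Set (EuclideanSpace ℝ (Fin n)))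
    (f : EuclideanSpace ℝ (Fin n) → ℝ → EuclideanSpace ℝ (Fin n)) : Prop :=
  (∀ x ∈ Ω, AEMeasurable (fun t => f x t) ((deltaMeasure T).restrict (tsUpDomain T))) ∧
    ∀ᵐ t ∂((deltaMeasure T).restrict (tsUpDomain T)), ContinuousOn (fun x => f x t) Ω

/-- Hypothesis (H∞): `f` is locally bounded. -/
def HInfty {n : ℕ} (T : Set ℝ) (Ω : Set (EuclideanSpace ℝ (Fin n)))
    (f : EuclideanSpace ℝ (Fin n) → ℝ → EuclideanSpace ℝ (Fin n)) : Prop :=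
  ∀ K : Set (EuclideanSpace ℝ (Fin n)), K ⊆ Ω → IsCompact K →
    ∀ a ∈ T, ∀ b ∈ T, a < b →
      ∃ M : ℝ, 0 ≤ M ∧
        ∀ᵐ t ∂((deltaMeasure T).restrict (Ico a b ∩ T)), ∀ x ∈ K, ‖f x t‖ ≤ M

/-- Hypothesis (H^rd_loc-Lip): local Lipschitz continuity at right-dense points. -/
def HrdLocLip {n : ℕ} (T : Set ℝ) (Ω : Set (EuclideanSpace ℝ (Fin n)))
    (f : EuclideanSpace ℝ (Fin n) → ℝ → EuclideanSpace ℝ (Fin n)) : Prop :=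
  ∀ xb ∈ Ω, ∀ tb ∈ T, ¬ IsGreatest T tb → RightDense T tb →
    ∃ R > (0:ℝ), ∃ δ > (0:ℝ), ∃ L : ℝ, 0 ≤ L ∧
      Metric.closedBall xb R ⊆ Ω ∧ tb + δ ∈ T ∧
      ∀ᵐ t ∂((deltaMeasure T).restrict (Ico tb (tb + δ) ∩ T)),
        ∀ x₁ ∈ Metric.closedBall xb R, ∀ x₂ ∈ Metric.closedBall xb R,
          ‖f x₁ t - f x₂ t‖ ≤ L * ‖x₁ - x₂‖

/-- Hypothesis (H^ld_loc-Lip): local Lipschitz continuity at left-dense points. -/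
def HldLocLip {n : ℕ} (T : Set ℝ) (Ω : Set (EuclideanSpace ℝ (Fin n)))
    (f : EuclideanSpace ℝ (Fin n) → ℝ → EuclideanSpace ℝ (Fin n)) : Prop :=
  ∀ xb ∈ Ω, ∀ tb ∈ T, ¬ IsLeast T tb → LeftDense T tb →
    ∃ R > (0:ℝ), ∃ δ > (0:ℝ), ∃ L : ℝ, 0 ≤ L ∧
      Metric.closedBall xb R ⊆ Ω ∧ tb - δ ∈ T ∧
      ∀ᵐ t ∂((deltaMeasure T).restrict (Ico (tb - δ) tb ∩ T)),
        ∀ x₁ ∈ Metric.closedBall xb R, ∀ x₂ ∈ Metric.closedBall xb R,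
          ‖f x₁ t - f x₂ t‖ ≤ L * ‖x₁ - x₂‖

/-- Hypothesis (H^forw_stab): `G⁺(t) : x ↦ x + μ(t) f(x,t)` maps `Ω` into `Ω`. -/
def HforwStab {n : ℕ} (T : Set ℝ) (Ω : Set (EuclideanSpace ℝ (Fin n)))
    (f : EuclideanSpace ℝ (Fin n) → ℝ → EuclideanSpace ℝ (Fin n)) : Prop :=
  ∀ t ∈ T, RightScattered T t → ∀ x ∈ Ω, x + tsGrain T t • f x t ∈ Ω

/-- Hypothesis (H^back_regr): `G⁺(t)` is a bijection from `Ω` onto `ℝⁿ`. -/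
def HbackRegr {n : ℕ} (T : Set ℝ) (Ω : Set (EuclideanSpace ℝ (Fin n)))
    (f : EuclideanSpace ℝ (Fin n) → ℝ → EuclideanSpace ℝ (Fin n)) : Prop :=
  ∀ t ∈ T, RightScattered T t → Set.BijOn (fun x => x + tsGrain T t • f x t) Ω univ

/-- Hypothesis (H^back_stab): `G⁻(t) : x ↦ x - μ(t) f(x,t)` maps `Ω` into `Ω`. -/
def HbackStab {n : ℕ} (T : Set ℝ) (Ω : Set (EuclideanSpace ℝ (Fin n)))
    (f : EuclideanSpace ℝ (Fin n) → ℝ → EuclideanSpace ℝ (Fin n)) : Prop :=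
  ∀ t ∈ T, RightScattered T t → ∀ x ∈ Ω, x - tsGrain T t • f x t ∈ Ω

/-- Hypothesis (H^forw_regr): `G⁻(t)` is a bijection from `Ω` onto `ℝⁿ`. -/
def HforwRegr {n : ℕ} (T : Set ℝ) (Ω : Set (EuclideanSpace ℝ (Fin n)))
    (f : EuclideanSpace ℝ (Fin n) → ℝ → EuclideanSpace ℝ (Fin n)) : Prop :=
  ∀ t ∈ T, RightScattered T t → Set.BijOn (fun x => x - tsGrain T t • f x t) Ω univ

/-- Hypothesis (H^glob_Lip): global Lipschitz continuity. -/
def HglobLip {n : ℕ} (T : Set ℝ) (Ω : Set (EuclideanSpace ℝ (Fin n)))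
    (f : EuclideanSpace ℝ (Fin n) → ℝ → EuclideanSpace ℝ (Fin n)) : Prop :=
  ∃ L : ℝ, 0 ≤ L ∧
    ∀ᵐ t ∂((deltaMeasure T).restrict (tsUpDomain T)),
      ∀ x₁ ∈ Ω, ∀ x₂ ∈ Ω, ‖f x₁ t - f x₂ t‖ ≤ L * ‖x₁ - x₂‖

/-- The relation `a ⊴ t₀ ⊴ b`. -/
def Trile (T : Set ℝ) (t₀ a b : ℝ) : Prop :=
  (IsLeast T t₀ ∧ a = t₀ ∧ t₀ < b) ∨
  (IsGreatest T t₀ ∧ a < t₀ ∧ t₀ = b) ∨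
  (¬ IsLeast T t₀ ∧ ¬ IsGreatest T t₀ ∧ a < t₀ ∧ t₀ < b)

/-- `(q, [a,b]_𝕋)` is a solution of the non shifted Δ-Cauchy problem (Δ-CP). -/
def IsSolIcc {n : ℕ} (T : Set ℝ) (Ω : Set (EuclideanSpace ℝ (Fin n)))
    (f : EuclideanSpace ℝ (Fin n) → ℝ → EuclideanSpace ℝ (Fin n))
    (t₀ : ℝ) (q₀ : EuclideanSpace ℝ (Fin n))
    (q : ℝ → EuclideanSpace ℝ (Fin n)) (a b : ℝ) : Prop :=
  (∀ t ∈ Icc a b ∩ T, q t ∈ Ω) ∧ DeltaAC T a b q ∧ q t₀ = q₀ ∧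
    ∀ᵐ t ∂((deltaMeasure T).restrict (Ico a b ∩ T)),
      HasDeltaDerivAt T q (f (q t) t) t

/-- `(q, [a,b]_𝕋)` is a solution of the shifted Δ-Cauchy problem (Δ-CP^σ). -/
def IsSolIccS {n : ℕ} (T : Set ℝ) (Ω : Set (EuclideanSpace ℝ (Fin n)))
    (f : EuclideanSpace ℝ (Fin n) → ℝ → EuclideanSpace ℝ (Fin n))
    (t₀ : ℝ) (q₀ : EuclideanSpace ℝ (Fin n))
    (q : ℝ → EuclideanSpace ℝ (Fin n)) (a b : ℝ) : Prop :=
  (∀ t ∈ Icc a b ∩ T, q t ∈ Ω) ∧ DeltaAC T a b q ∧ q t₀ = q₀ ∧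
    ∀ᵐ t ∂((deltaMeasure T).restrict (Ico a b ∩ T)),
      HasDeltaDerivAt T q (f (q (tsSigma T t)) t) t

/-- `I_𝕋 ∈ 𝕀`: `I` is a real interval containing points `a, b` of `T` with `a ⊴ t₀ ⊴ b`. -/
def MemI (T : Set ℝ) (t₀ : ℝ) (I : Set ℝ) : Prop :=
  I.OrdConnected ∧ ∃ a ∈ I ∩ T, ∃ b ∈ I ∩ T, Trile T t₀ a b

/-- `(q, I_𝕋)` is a solution of (Δ-CP). -/
def IsSol {n : ℕ} (T : Set ℝ) (Ω : Set (EuclideanSpace ℝ (Fin n)))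
    (f : EuclideanSpace ℝ (Fin n) → ℝ → EuclideanSpace ℝ (Fin n))
    (t₀ : ℝ) (q₀ : EuclideanSpace ℝ (Fin n))
    (q : ℝ → EuclideanSpace ℝ (Fin n)) (I : Set ℝ) : Prop :=
  MemI T t₀ I ∧ (∀ t ∈ I ∩ T, q t ∈ Ω) ∧
    ∀ a ∈ I ∩ T, ∀ b ∈ I ∩ T, Trile T t₀ a b → IsSolIcc T Ω f t₀ q₀ q a b

/-- `(q, I_𝕋)` is a solution of (Δ-CP^σ). -/
def IsSolS {n : ℕ} (T : Set ℝ) (Ω : Set (EuclideanSpace ℝ (Fin n)))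
    (f : EuclideanSpace ℝ (Fin n) → ℝ → EuclideanSpace ℝ (Fin n))
    (t₀ : ℝ) (q₀ : EuclideanSpace ℝ (Fin n))
    (q : ℝ → EuclideanSpace ℝ (Fin n)) (I : Set ℝ) : Prop :=
  MemI T t₀ I ∧ (∀ t ∈ I ∩ T, q t ∈ Ω) ∧
    ∀ a ∈ I ∩ T, ∀ b ∈ I ∩ T, Trile T t₀ a b → IsSolIccS T Ω f t₀ q₀ q a b

/-- `(q₁, I₁_𝕋)` is an extension of `(q, I_𝕋)`. -/
def SolExtends {n : ℕ} (T : Set ℝ) (q₁ : ℝ → EuclideanSpace ℝ (Fin n)) (I₁ : Set ℝ)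
    (q : ℝ → EuclideanSpace ℝ (Fin n)) (I : Set ℝ) : Prop :=
  I ∩ T ⊆ I₁ ∩ T ∧ EqOn q₁ q (I ∩ T)

/-- `(q, I_𝕋)` is a maximal solution of (Δ-CP). -/
def IsMaxSol {n : ℕ} (T : Set ℝ) (Ω : Set (EuclideanSpace ℝ (Fin n)))
    (f : EuclideanSpace ℝ (Fin n) → ℝ → EuclideanSpace ℝ (Fin n))
    (t₀ : ℝ) (q₀ : EuclideanSpace ℝ (Fin n))
    (q : ℝ → EuclideanSpace ℝ (Fin n)) (I : Set ℝ) : Prop :=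
  IsSol T Ω f t₀ q₀ q I ∧
    ∀ q₁ I₁, IsSol T Ω f t₀ q₀ q₁ I₁ → SolExtends T q₁ I₁ q I → I₁ ∩ T = I ∩ T

/-- `(q, I_𝕋)` is a maximal solution of (Δ-CP^σ). -/
def IsMaxSolS {n : ℕ} (T : Set ℝ) (Ω : Set (EuclideanSpace ℝ (Fin n)))
    (f : EuclideanSpace ℝ (Fin n) → ℝ → EuclideanSpace ℝ (Fin n))
    (t₀ : ℝ) (q₀ : EuclideanSpace ℝ (Fin n))
    (q : ℝ → EuclideanSpace ℝ (Fin n)) (I : Set ℝ) : Prop :=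
  IsSolS T Ω f t₀ q₀ q I ∧
    ∀ q₁ I₁, IsSolS T Ω f t₀ q₀ q₁ I₁ → SolExtends T q₁ I₁ q I → I₁ ∩ T = I ∩ T


/-! ### The floor map and the structure of `μ_Δ` -/

/-- The largest point of `T` that is `≤ s`, when `t₀ = min T ≤ s`. Left of `t₀` the value is `t₀`,
so that the map is monotone on the whole real line. -/
def tsFloor (T : Set ℝ) (t₀ s : ℝ) : ℝ := sSup (T ∩ Iic (max s t₀))

section TimeScale

variable {T : Set ℝ} {t₀ : ℝ}

lemma tsFloor_mem (hT : IsClosed T) (hmin : IsLeast T t₀) (s : ℝ) :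
    tsFloor T t₀ s ∈ T ∩ Iic (max s t₀) :=
  (hT.inter isClosed_Iic).csSup_mem ⟨t₀, hmin.1, le_max_right s t₀⟩ ⟨max s t₀, fun _ hx => hx.2⟩

lemma le_tsFloor {s x : ℝ} (hx : x ∈ T) (hxs : x ≤ max s t₀) : x ≤ tsFloor T t₀ s :=
  le_csSup ⟨max s t₀, fun _ hx => hx.2⟩ ⟨hx, hxs⟩

lemma tsFloor_mono (hT : IsClosed T) (hmin : IsLeast T t₀) : Monotone (tsFloor T t₀) :=
  fun a _ hab => le_tsFloor (tsFloor_mem hT hmin a).1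
    ((tsFloor_mem hT hmin a).2.trans (max_le_max_right _ hab))

lemma tsFloor_ge (hmin : IsLeast T t₀) (s : ℝ) : t₀ ≤ tsFloor T t₀ s :=
  le_tsFloor hmin.1 (le_max_right _ _)

lemma tsFloor_le (hT : IsClosed T) (hmin : IsLeast T t₀) {s : ℝ} (hs : t₀ ≤ s) :
    tsFloor T t₀ s ≤ s := by
  simpa [hs] using (tsFloor_mem hT hmin s).2

lemma tsFloor_eq (hT : IsClosed T) (hmin : IsLeast T t₀) {s p : ℝ} (hp : p ∈ T) (hps : p ≤ s)
    (h : ∀ x ∈ T, x ≤ s → x ≤ p) : tsFloor T t₀ s = p :=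
  le_antisymm (h _ (tsFloor_mem hT hmin s).1 (tsFloor_le hT hmin ((hmin.2 hp).trans hps)))
    (le_tsFloor hp (hps.trans (le_max_left _ _)))

lemma tsFloor_self (hT : IsClosed T) (hmin : IsLeast T t₀) {s : ℝ} (hs : s ∈ T) :
    tsFloor T t₀ s = s :=
  tsFloor_eq hT hmin hs le_rfl fun _ _ h => h

lemma tsSigma_le {t τ : ℝ} (hτ : τ ∈ T) (h : t < τ) : tsSigma T t ≤ τ := by
  rw [tsSigma, if_pos ⟨τ, hτ, h⟩]
  exact csInf_le ⟨t, fun _ hx => hx.2.le⟩ ⟨hτ, h⟩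

lemma le_tsSigma (T : Set ℝ) (t : ℝ) : t ≤ tsSigma T t := by
  rw [tsSigma]
  split_ifs with h
  · exact le_csInf h fun _ hx => hx.2.le
  · exact le_rfl

lemma tsSigma_mem (hT : IsClosed T) {t : ℝ} (h : RightScattered T t) : tsSigma T t ∈ T := by
  rw [RightScattered, tsSigma] at h
  rw [tsSigma]
  split_ifs with h1
  · have h2 := csInf_mem_closure h1 ⟨t, fun _ hx => hx.2.le⟩
    exact hT.closure_subset (closure_mono (fun _ hx => hx.1) h2)
  · simp [h1] at h

lemma tsFloor_eq_of_gap (hT : IsClosed T) (hmin : IsLeast T t₀) {p s : ℝ} (hp : p ∈ T)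
    (hps : p ≤ s) (hs : s < tsSigma T p) : tsFloor T t₀ s = p :=
  tsFloor_eq hT hmin hp hps fun x hx hxs => by
    by_contra! hlt
    exact absurd (tsSigma_le hx hlt) (not_le.2 (hxs.trans_lt hs))

/-- Below `sup T`, a point outside `T` lies in the gap following its floor. -/
lemma gap_of_notMem (hT : IsClosed T) (hmin : IsLeast T t₀) {s τ : ℝ} (hs : t₀ ≤ s)
    (hsT : s ∉ T) (hτ : τ ∈ T) (hsτ : s < τ) :
    tsFloor T t₀ s < s ∧ s < tsSigma T (tsFloor T t₀ s) := by
  have hm := (tsFloor_mem hT hmin s).1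
  have h1 : tsFloor T t₀ s < s :=
    lt_of_le_of_ne (tsFloor_le hT hmin hs) fun h => hsT (h ▸ hm)
  refine ⟨h1, ?_⟩
  have hne : ({x | x ∈ T ∧ tsFloor T t₀ s < x}).Nonempty := ⟨τ, hτ, h1.trans hsτ⟩
  have h2 : ∀ x ∈ T, tsFloor T t₀ s < x → s ≤ x := fun x hx hlt => by
    by_contra! hxs
    exact absurd (le_tsFloor hx (hxs.le.trans (le_max_left s t₀))) (not_le.2 hlt)
  have h3 : s ≤ tsSigma T (tsFloor T t₀ s) := by
    rw [tsSigma, if_pos hne]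
    exact le_csInf hne fun x hx => h2 x hx.1 hx.2
  exact lt_of_le_of_ne h3 fun h => hsT (h ▸ tsSigma_mem hT (h1.trans_le h3))

/-- The gaps `(r, σ(r))` are pairwise disjoint, so there are only countably many of them. -/
lemma countable_rightScattered (T : Set ℝ) : {t | t ∈ T ∧ RightScattered T t}.Countable := by
  refine Set.PairwiseDisjoint.countable_of_Ioo (y := tsSigma T) ?_ fun x hx => hx.2
  have key : ∀ a ∈ T, ∀ b ∈ T, a < b → Disjoint (Ioo a (tsSigma T a)) (Ioo b (tsSigma T b)) := by
    intro a _ b hb hab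
    rw [Set.disjoint_left]
    intro x hx hx'
    exact absurd (tsSigma_le hb hab) (not_le.2 (hx'.1.trans hx.2))
  intro a ha b hb hab
  rcases lt_or_gt_of_ne hab with h | h
  · exact key a ha.1 b hb.1 h
  · exact (key b hb.1 a ha.1 h).symm

/-- A property holds `Δ`-a.e. iff it holds at Lebesgue-almost every point of `T` and at every
right-scattered point: the latter are atoms of positive mass. -/
lemma ae_delta_iff (hT : IsClosed T) {A : Set ℝ} (hA : MeasurableSet A) {P : ℝ → Prop} :
    (∀ᵐ t ∂((deltaMeasure T).restrict A), P t) ↔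
      (∀ᵐ t : ℝ, t ∈ T → t ∈ A → P t) ∧ ∀ r ∈ T, RightScattered T r → r ∈ A → P r := by
  have : Countable {t : ℝ // t ∈ T ∧ RightScattered T t} := (countable_rightScattered T).to_subtype
  rw [ae_restrict_iff' hA, deltaMeasure, ae_add_measure_iff, ae_restrict_iff' hT.measurableSet,
    Measure.ae_sum_iff]
  refine and_congr_right fun _ => ⟨fun h r hr hs hrA => ?_, fun h r => ?_⟩
  · have := h ⟨r, hr, hs⟩
    have hc : ENNReal.ofReal (tsGrain T r) ≠ 0 := by
      simpa [tsGrain, sub_pos] using show r < tsSigma T r from hs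
    rw [Measure.ae_ennreal_smul_measure_iff hc, ae_dirac_eq] at this
    exact this hrA
  · refine Measure.ae_smul_measure ?_ _
    rw [ae_dirac_eq]
    exact fun hrA => h r.1 r.2.1 r.2.2 hrA

lemma measurableSet_tsUpDomain (hT : IsClosed T) : MeasurableSet (tsUpDomain T) := by
  have : tsUpDomain T = T \ {t | IsGreatest T t} := rfl
  rw [this]
  refine hT.measurableSet.diff (Set.Subsingleton.measurableSet ?_)
  exact fun a ha b hb => ha.unique hb

lemma RightScattered.mem_tsUpDomain (hT : IsClosed T) {t : ℝ} (ht : t ∈ T)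
    (h : RightScattered T t) : t ∈ tsUpDomain T :=
  ⟨ht, fun hg => absurd (hg.2 (tsSigma_mem hT h)) (not_le.2 h)⟩

lemma mem_tsUpDomain {t τ : ℝ} (ht : t ∈ T) (hτ : τ ∈ T) (h : t < τ) : t ∈ tsUpDomain T :=
  ⟨ht, fun hg => absurd (hg.2 hτ) (not_le.2 h)⟩

/-- A point below `sup T` that is not right-scattered is approached by `T` from the right. -/
lemma accPt_of_rightDense {t τ : ℝ} (hτ : τ ∈ T) (h : t < τ)
    (hd : ¬ RightScattered T t) : AccPt t (𝓟 T) := by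
  rw [accPt_iff_nhds]
  intro U hU
  obtain ⟨ε, hε, hεU⟩ := Metric.mem_nhds_iff.1 hU
  have hne : ({x | x ∈ T ∧ t < x}).Nonempty := ⟨τ, hτ, h⟩
  rw [RightScattered, tsSigma, if_pos hne, not_lt] at hd
  obtain ⟨y, hy, hyl⟩ := exists_lt_of_csInf_lt hne (hd.trans_lt (lt_add_of_pos_right t hε))
  refine ⟨y, ⟨hεU ?_, hy.1⟩, hy.2.ne'⟩
  rw [Metric.mem_ball, Real.dist_eq, abs_of_pos (sub_pos.2 hy.2)]
  linarith

end TimeScale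

/-! ### Volterra equations with delay -/

section Volterra

variable {E : Type*} [NormedAddCommGroup E]

/-- A function on `[t₀, b]` dominated by `t ↦ S * exp (λ (t - t₀))` for the least such `S`, with
`λ = 2C + 1`, has `S ≤ S / 2` by the hypothesis `h`; hence it vanishes. -/
lemma eq_zero_of_weighted {W : ℝ → E} {t₀ b C : ℝ} (hC : 0 ≤ C)
    (hW : ContinuousOn W (Icc t₀ b))
    (h : ∀ S, (∀ s ∈ Icc t₀ b, ‖W s‖ ≤ S * Real.exp ((2 * C + 1) * (s - t₀))) →
      ∀ t ∈ Icc t₀ b, ‖W t‖ ≤ ∫ s in t₀..t, C * (S * Real.exp ((2 * C + 1) * (s - t₀)))) :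
    ∀ t ∈ Icc t₀ b, W t = 0 := by
  intro t ht
  set l := 2 * C + 1 with hl
  have hl0 : 0 < l := by positivity
  have hc : ContinuousOn (fun s => ‖W s‖ * Real.exp (-(l * (s - t₀)))) (Icc t₀ b) :=
    hW.norm.mul (by fun_prop)
  obtain ⟨m, hm, hmax⟩ := isCompact_Icc.exists_isMaxOn ⟨t, ht⟩ hc
  set S := ‖W m‖ * Real.exp (-(l * (m - t₀))) with hS
  have hS0 : 0 ≤ S := by positivity
  have hdom : ∀ s ∈ Icc t₀ b, ‖W s‖ ≤ S * Real.exp (l * (s - t₀)) := by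
    intro s hs
    have h1 : ‖W s‖ * Real.exp (-(l * (s - t₀))) ≤ S := hmax hs
    calc ‖W s‖ = ‖W s‖ * Real.exp (-(l * (s - t₀))) * Real.exp (l * (s - t₀)) := by
          rw [mul_assoc, ← Real.exp_add]; simp
      _ ≤ _ := by gcongr
  have h2 := h S hdom m hm
  have h3 : ∫ s in t₀..m, C * (S * Real.exp (l * (s - t₀)))
      = C * S * ((Real.exp (l * (m - t₀)) - 1) / l) := by
    rw [intervalIntegral.integral_eq_sub_of_hasDerivAt
      (f := fun s => C * S * (Real.exp (l * (s - t₀)) / l))]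
    · simp; ring
    · intro x _
      have : HasDerivAt (fun s => l * (s - t₀)) l x := by
        simpa using ((hasDerivAt_id x).sub_const t₀).const_mul l
      convert! (this.exp.div_const l).const_mul (C * S) using 1
      field_simp
    · exact Continuous.intervalIntegrable (by fun_prop) _ _
  rw [h3] at h2
  have h4 : S ≤ S / 2 := by
    have h5 : C * S * ((Real.exp (l * (m - t₀)) - 1) / l) ≤ S / 2 * Real.exp (l * (m - t₀)) := by
      rw [mul_div_assoc', div_le_iff₀ hl0]
      have := Real.exp_pos (l * (m - t₀))
      have h6 : 0 ≤ S * Real.exp (l * (m - t₀)) := by positivity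
      have h7 : 0 ≤ C * S := by positivity
      rw [hl]
      nlinarith
    calc S ≤ S / 2 * Real.exp (l * (m - t₀)) * Real.exp (-(l * (m - t₀))) := by
          rw [hS]; gcongr; exact h2.trans h5
      _ = S / 2 := by rw [mul_assoc, ← Real.exp_add]; simp
  have h5 : S = 0 := by linarith
  have := hdom t ht
  rw [h5, zero_mul] at this
  exact norm_le_zero_iff.1 this

variable [NormedSpace ℝ E]

lemma locallyIntegrable_kernel [CompleteSpace E] [SecondCountableTopology E]
    {K : ℝ → E →L[ℝ] E} {C : ℝ}
    (hK : AEStronglyMeasurable K volume) (hKC : ∀ᵐ s, ‖K s‖ ≤ C) {r : ℝ → ℝ} (hr : Monotone r)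
    {Q : ℝ → E} (hQ : Continuous Q) : LocallyIntegrable (fun s => K s (Q (r s))) volume := by
  have hm : AEStronglyMeasurable (fun s => K s (Q (r s))) volume := by
    borelize E
    have h1 : AEStronglyMeasurable (fun s => Q (r s)) volume :=
      (hQ.measurable.comp hr.measurable).aestronglyMeasurable
    exact (ContinuousLinearMap.id ℝ (E →L[ℝ] E)).aestronglyMeasurable_comp₂ hK h1
  intro x
  refine ⟨Icc (x - 1) (x + 1), Icc_mem_nhds (by linarith) (by linarith), ?_⟩
  obtain ⟨B, hB⟩ := (isCompact_Icc (a := r (x - 1)) (b := r (x + 1))).exists_bound_of_continuousOn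
    hQ.continuousOn
  refine Measure.integrableOn_of_bounded (M := C * B) (by simp) hm ?_
  rw [ae_restrict_iff' measurableSet_Icc]
  filter_upwards [hKC] with s hs hsx
  have h1 := hB (r s) ⟨hr hsx.1, hr hsx.2⟩
  have h2 : 0 ≤ C := (norm_nonneg _).trans hs
  exact ((K s).le_opNorm _).trans (by gcongr)

/-- The delayed linear Volterra equation has a global solution: after the substitution
`Q t = exp (λ (t - t₀)) • x t`, `λ = 2C + 1`, it is a fixed point equation on bounded continuous
functions with contraction constant `1 / 2`. -/
lemma exists_volterra [CompleteSpace E] [SecondCountableTopology E]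
    {K : ℝ → E →L[ℝ] E} {C : ℝ} (hC : 0 ≤ C)
    (hK : AEStronglyMeasurable K volume) (hKC : ∀ᵐ s, ‖K s‖ ≤ C) {r : ℝ → ℝ} (hr : Monotone r)
    {t₀ : ℝ} (hr1 : ∀ s, t₀ ≤ s → r s ≤ s) (q₀ : E) :
    ∃ Q : ℝ → E, Continuous Q ∧ ∀ t, t₀ ≤ t → Q t = q₀ + ∫ s in t₀..t, K s (Q (r s)) := by
  set l := 2 * C + 1 with hl
  have hl0 : 0 < l := by positivity
  -- multiplication by the weight
  let U : (BoundedContinuousFunction ℝ E) → ℝ → E := fun x s => Real.exp (l * (s - t₀)) • x s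
  have hU : ∀ x, Continuous (U x) := fun x => by
    have := x.continuous
    fun_prop
  have hloc : ∀ x, LocallyIntegrable (fun s => K s (U x (r s))) volume :=
    fun x => locallyIntegrable_kernel hK hKC hr (hU x)
  have hint : ∀ x a b, IntervalIntegrable (fun s => K s (U x (r s))) volume a b :=
    fun x a b => intervalIntegrable_iff.mpr <|
      ((hloc x).integrableOn_isCompact isCompact_uIcc).mono_set uIoc_subset_uIcc
  have hexp : ∀ t, ∫ s in t₀..t, Real.exp (l * (s - t₀)) = (Real.exp (l * (t - t₀)) - 1) / l := by
    intro t
    rw [intervalIntegral.integral_eq_sub_of_hasDerivAt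
      (f := fun s => Real.exp (l * (s - t₀)) / l)]
    · simp; ring
    · intro x _
      have : HasDerivAt (fun s => l * (s - t₀)) l x := by
        simpa using ((hasDerivAt_id x).sub_const t₀).const_mul l
      convert! this.exp.div_const l using 1
      field_simp
    · exact Continuous.intervalIntegrable (by fun_prop) _ _
  -- this estimate, applied to a difference, gives the contraction constant
  have hest : ∀ (z : ℝ → E) (D : ℝ), (∀ s, ‖z s‖ ≤ D) → ∀ t, t₀ ≤ t →
      ‖∫ s in t₀..t, K s (Real.exp (l * (r s - t₀)) • z (r s))‖
        ≤ (1 / 2) * D * Real.exp (l * (t - t₀)) := by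
    intro z D hz t ht
    have hD : 0 ≤ D := (norm_nonneg _).trans (hz 0)
    have h1 : ‖∫ s in t₀..t, K s (Real.exp (l * (r s - t₀)) • z (r s))‖
        ≤ ∫ s in t₀..t, C * D * Real.exp (l * (s - t₀)) := by
      refine intervalIntegral.norm_integral_le_of_norm_le ht ?_
        (Continuous.intervalIntegrable (by fun_prop) _ _)
      filter_upwards [hKC] with s hs hst
      refine ((K s).le_opNorm _).trans ?_
      rw [norm_smul, Real.norm_of_nonneg (Real.exp_pos _).le]
      have h2 : Real.exp (l * (r s - t₀)) ≤ Real.exp (l * (s - t₀)) := by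
        have := hr1 s hst.1.le
        gcongr
      calc ‖K s‖ * (Real.exp (l * (r s - t₀)) * ‖z (r s)‖)
          ≤ C * (Real.exp (l * (s - t₀)) * D) := by gcongr; exact hz _
        _ = _ := by ring
    rw [intervalIntegral.integral_const_mul, hexp] at h1
    refine h1.trans ?_
    rw [mul_div_assoc', div_le_iff₀ hl0, hl]
    have := Real.exp_pos (l * (t - t₀))
    have h6 : 0 ≤ D * Real.exp (l * (t - t₀)) := by positivity
    have h7 : 0 ≤ C * D := by positivity
    nlinarith
  let Ψ : (BoundedContinuousFunction ℝ E) → ℝ → E := fun x t =>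
    Real.exp (-(l * (max t t₀ - t₀))) • (q₀ + ∫ s in t₀..(max t t₀), K s (U x (r s)))
  have hΨc : ∀ x, Continuous (Ψ x) := fun x => by
    have h1 := intervalIntegral.continuous_primitive (hint x) t₀
    have h2 : Continuous fun t => ∫ s in t₀..(max t t₀), K s (U x (r s)) :=
      h1.comp (continuous_id.max continuous_const)
    fun_prop
  have hΨb : ∀ x t, ‖Ψ x t‖ ≤ ‖q₀‖ + (1 / 2) * ‖x‖ := by
    intro x t
    have h1 := hest x ‖x‖ x.norm_coe_le_norm (max t t₀) (le_max_right _ _)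
    have h2 : Real.exp (-(l * (max t t₀ - t₀))) ≤ 1 := by
      rw [Real.exp_le_one_iff]
      have : 0 ≤ max t t₀ - t₀ := sub_nonneg.2 (le_max_right _ _)
      have := mul_nonneg hl0.le this
      linarith
    have h3 : Real.exp (-(l * (max t t₀ - t₀))) * Real.exp (l * (max t t₀ - t₀)) = 1 := by
      rw [← Real.exp_add]; simp
    have h4 := Real.exp_pos (-(l * (max t t₀ - t₀)))
    calc ‖Ψ x t‖ ≤ Real.exp (-(l * (max t t₀ - t₀))) *
          (‖q₀‖ + (1 / 2) * ‖x‖ * Real.exp (l * (max t t₀ - t₀))) := by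
          rw [norm_smul, Real.norm_of_nonneg h4.le]
          gcongr
          exact (norm_add_le _ _).trans (by gcongr)
      _ = Real.exp (-(l * (max t t₀ - t₀))) * ‖q₀‖ + (1 / 2) * ‖x‖ *
          (Real.exp (-(l * (max t t₀ - t₀))) * Real.exp (l * (max t t₀ - t₀))) := by ring
      _ ≤ 1 * ‖q₀‖ + (1 / 2) * ‖x‖ * 1 := by rw [h3]; gcongr
      _ = _ := by ring
  let Φ : BoundedContinuousFunction ℝ E → BoundedContinuousFunction ℝ E := fun x =>
    BoundedContinuousFunction.ofNormedAddCommGroup (Ψ x) (hΨc x) _ (hΨb x)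
  have hcontr : ContractingWith (1 / 2) Φ := by
    refine ⟨NNReal.half_lt_self one_ne_zero, LipschitzWith.of_dist_le_mul ?_⟩
    intro x y
    rw [BoundedContinuousFunction.dist_le (by positivity)]
    intro t
    have h1 := hest (x - y) (dist x y) (fun s => by
      rw [Pi.sub_apply, ← dist_eq_norm]; exact BoundedContinuousFunction.dist_coe_le_dist s)
      (max t t₀) (le_max_right _ _)
    have h2 : Φ x t - Φ y t = Real.exp (-(l * (max t t₀ - t₀))) •
        ∫ s in t₀..(max t t₀), K s (Real.exp (l * (r s - t₀)) • ((x - y : ℝ → E) (r s))) := by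
      change Ψ x t - Ψ y t = _
      rw [← smul_sub, add_sub_add_left_eq_sub, ← intervalIntegral.integral_sub (hint x _ _)
        (hint y _ _)]
      simp only [U, ← map_sub, ← smul_sub, Pi.sub_apply]
    rw [dist_eq_norm, h2, norm_smul, Real.norm_of_nonneg (Real.exp_pos _).le]
    calc _ ≤ Real.exp (-(l * (max t t₀ - t₀))) *
          ((1 / 2) * dist x y * Real.exp (l * (max t t₀ - t₀))) := by gcongr
      _ = (1 / 2) * dist x y *
          (Real.exp (-(l * (max t t₀ - t₀))) * Real.exp (l * (max t t₀ - t₀))) := by ring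
      _ = _ := by rw [← Real.exp_add]; simp
  obtain ⟨x, hx, -⟩ := hcontr.exists_fixedPoint 0 (edist_ne_top _ _)
  refine ⟨U x, hU x, fun t ht => ?_⟩
  have h1 : x t = Ψ x t := by
    conv_lhs => rw [← hx.eq]
    rfl
  have h2 : max t t₀ = t := max_eq_left ht
  simp only [Ψ, h2] at h1
  change Real.exp (l * (t - t₀)) • x t = _
  rw [h1, smul_smul, ← Real.exp_add]
  simp

end Volterra

/-! ### Absolutely continuous functions on a time scale -/

section AC

variable {n : ℕ} {T : Set ℝ} {a b : ℝ} {q : ℝ → EuclideanSpace ℝ (Fin n)}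

/-- The families of intervals may be indexed by any finite set of natural numbers. -/
lemma DeltaAC.finset (hq : DeltaAC T a b q) : ∀ ε > (0:ℝ), ∃ δ > (0:ℝ),
    ∀ (s : Finset ℕ) (u v : ℕ → ℝ),
    (∀ k ∈ s, u k ∈ Icc a b ∩ T ∧ v k ∈ Icc a b ∩ T ∧ u k ≤ v k) →
    (∀ i ∈ s, ∀ j ∈ s, i ≠ j → Disjoint (Icc (u i) (v i)) (Icc (u j) (v j))) →
    (∑ k ∈ s, (v k - u k)) < δ → (∑ k ∈ s, ‖q (v k) - q (u k)‖) < ε := by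
  intro ε hε
  obtain ⟨δ, hδ, h⟩ := hq ε hε
  refine ⟨δ, hδ, fun s u v hs hd hsum => ?_⟩
  obtain ⟨e, he⟩ := (Finset.range s.card).finite_toSet.exists_bijOn_of_encard_eq
    (t := (s : Set ℕ)) (by
      rw [Set.encard_coe_eq_coe_finsetCard, Set.encard_coe_eq_coe_finsetCard, Finset.card_range])
  have hmem : ∀ k < s.card, e k ∈ s := fun k hk => by
    simpa using he.mapsTo (by simpa using hk)
  have hsumeq : ∀ f : ℕ → ℝ, ∑ k ∈ Finset.range s.card, f (e k) = ∑ k ∈ s, f k := fun f =>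
    Finset.sum_nbij e (fun k hk => hmem k (by simpa using hk)) he.injOn he.surjOn fun _ _ => rfl
  have := h s.card (u ∘ e) (v ∘ e) (fun k hk => (hs _ (hmem k hk)).1)
    (fun k hk => (hs _ (hmem k hk)).2.1) (fun k hk => (hs _ (hmem k hk)).2.2)
    (fun i hi j hj hij => hd _ (hmem i hi) _ (hmem j hj)
      fun heq => hij (he.injOn (by simpa using hi) (by simpa using hj) heq))
    (by rw [← hsumeq] at hsum; exact hsum)
  rw [← hsumeq]
  exact this

/-- Absolute continuity may be tested on intervals that are allowed to touch: listing such a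
family from left to right, the members of even rank are at positive distance from one another,
and so are those of odd rank. -/
lemma DeltaAC.finset_Ioc (hq : DeltaAC T a b q) : ∀ ε > (0:ℝ), ∃ δ > (0:ℝ),
    ∀ (s : Finset ℕ) (u v : ℕ → ℝ),
    (∀ k ∈ s, u k ∈ Icc a b ∩ T ∧ v k ∈ Icc a b ∩ T ∧ u k < v k) →
    (∀ i ∈ s, ∀ j ∈ s, i ≠ j → Disjoint (Ioc (u i) (v i)) (Ioc (u j) (v j))) →
    (∑ k ∈ s, (v k - u k)) < δ → (∑ k ∈ s, ‖q (v k) - q (u k)‖) < ε := by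
  intro ε hε
  obtain ⟨δ, hδ, h⟩ := hq.finset (ε / 2) (by positivity)
  refine ⟨δ, hδ, fun s u v hs hd hsum => ?_⟩
  obtain ⟨rk, hrk⟩ : ∃ rk : ℕ → ℕ, ∀ i, rk i = (s.filter fun l => u l < u i).card :=
    ⟨_, fun _ => rfl⟩
  -- of two members, one lies to the left of the other
  have hsep : ∀ i ∈ s, ∀ j ∈ s, i ≠ j → u i ≤ u j → v i ≤ u j := by
    intro i hi j hj hij hle
    by_contra! hlt
    have h1 : min (v i) (v j) ∈ Ioc (u i) (v i) :=
      ⟨lt_min (hs i hi).2.2 (hle.trans_lt (hs j hj).2.2), min_le_left _ _⟩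
    exact Set.disjoint_left.1 (hd i hi j hj hij) h1
      ⟨lt_min hlt (hs j hj).2.2, min_le_right _ _⟩
  -- touching members have consecutive ranks
  have hsucc : ∀ i ∈ s, ∀ j ∈ s, v i = u j → rk j = rk i + 1 := by
    intro i hi j hj hij
    have h1 : (s.filter fun l => u l < u j) = insert i (s.filter fun l => u l < u i) := by
      ext l
      simp only [Finset.mem_filter, Finset.mem_insert]
      constructor
      · rintro ⟨hl, hlt⟩
        by_cases hli : l = i
        · exact Or.inl hli
        · refine Or.inr ⟨hl, ?_⟩
          by_contra! hle
          have := hsep i hi l hl (Ne.symm hli) hle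
          linarith
      · rintro (rfl | ⟨hl, hlt⟩)
        · exact ⟨hi, hij ▸ (hs l hi).2.2⟩
        · exact ⟨hl, hlt.trans (hij ▸ (hs i hi).2.2)⟩
    rw [hrk, hrk, h1]
    exact Finset.card_insert_of_notMem (by simp)
  have hpar : ∀ i ∈ s, ∀ j ∈ s, i ≠ j → (Even (rk i) ↔ Even (rk j)) →
      Disjoint (Icc (u i) (v i)) (Icc (u j) (v j)) := by
    have key : ∀ i ∈ s, ∀ j ∈ s, i ≠ j → (Even (rk i) ↔ Even (rk j)) → u i ≤ u j →
        Disjoint (Icc (u i) (v i)) (Icc (u j) (v j)) := by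
      intro i hi j hj hij he hle
      have h1 := hsep i hi j hj hij hle
      have h2 : v i ≠ u j := fun h2 => by
        rw [hsucc i hi j hj h2, Nat.even_add_one] at he
        tauto
      rw [Set.disjoint_left]
      intro x hx hx'
      exact absurd (hx'.1.trans hx.2) (not_le.2 (lt_of_le_of_ne h1 h2))
    intro i hi j hj hij he
    rcases le_total (u i) (u j) with hle | hle
    · exact key i hi j hj hij he hle
    · exact (key j hj i hi hij.symm he.symm hle).symm
  have hlen : ∀ (p : ℕ → Prop) [DecidablePred p], ∑ k ∈ s.filter p, (v k - u k) < δ := fun p _ =>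
    (Finset.sum_le_sum_of_subset_of_nonneg (Finset.filter_subset _ _)
      fun k hk _ => (sub_pos.2 (hs k hk).2.2).le).trans_lt hsum
  have h1 := h (s.filter fun k => Even (rk k)) u v
    (fun k hk => by
      have := hs k (Finset.mem_filter.1 hk).1
      exact ⟨this.1, this.2.1, this.2.2.le⟩)
    (fun i hi j hj hij => by
      rw [Finset.mem_filter] at hi hj
      exact hpar i hi.1 j hj.1 hij (by tauto)) (hlen _)
  have h2 := h (s.filter fun k => ¬ Even (rk k)) u v
    (fun k hk => by
      have := hs k (Finset.mem_filter.1 hk).1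
      exact ⟨this.1, this.2.1, this.2.2.le⟩)
    (fun i hi j hj hij => by
      rw [Finset.mem_filter] at hi hj
      exact hpar i hi.1 j hj.1 hij (by tauto)) (hlen _)
  rw [← Finset.sum_filter_add_sum_filter_not s fun k => Even (rk k)]
  linarith

lemma DeltaAC.continuousOn (hq : DeltaAC T a b q) : ContinuousOn q (Icc a b ∩ T) := by
  rw [Metric.continuousOn_iff]
  intro x hx ε hε
  obtain ⟨δ, hδ, h⟩ := hq ε hε
  refine ⟨δ, hδ, fun y hy hxy => ?_⟩
  rw [Real.dist_eq] at hxy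
  rw [dist_eq_norm]
  have key : ∀ c ∈ Icc a b ∩ T, ∀ d ∈ Icc a b ∩ T, c ≤ d → d - c < δ → ‖q d - q c‖ < ε := by
    intro c hc d hd hcd hlt
    simpa using h 1 (fun _ => c) (fun _ => d) (fun _ _ => hc) (fun _ _ => hd) (fun _ _ => hcd)
      (fun i hi j hj hij => absurd (by omega) hij) (by simpa using hlt)
  rcases le_total x y with hle | hle
  · exact key x hx y hy hle ((le_abs_self _).trans_lt hxy)
  · rw [norm_sub_rev]
    exact key y hy x hx hle (by rw [abs_sub_comm] at hxy; exact (le_abs_self _).trans_lt hxy)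

lemma DeltaAC.sub {q' : ℝ → EuclideanSpace ℝ (Fin n)} (hq : DeltaAC T a b q)
    (hq' : DeltaAC T a b q') : DeltaAC T a b (fun t => q t - q' t) := by
  intro ε hε
  obtain ⟨δ, hδ, h⟩ := hq (ε / 2) (by positivity)
  obtain ⟨δ', hδ', h'⟩ := hq' (ε / 2) (by positivity)
  refine ⟨min δ δ', by positivity, fun m u v hu hv huv hd hsum => ?_⟩
  have h1 := h m u v hu hv huv hd (hsum.trans_le (min_le_left _ _))
  have h2 := h' m u v hu hv huv hd (hsum.trans_le (min_le_right _ _))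
  calc _ ≤ ∑ k ∈ Finset.range m, (‖q (v k) - q (u k)‖ + ‖q' (v k) - q' (u k)‖) := by
        refine Finset.sum_le_sum fun k _ => ?_
        rw [sub_sub_sub_comm]
        exact norm_sub_le _ _
    _ < ε := by rw [Finset.sum_add_distrib]; linarith

end AC

/-! ### Primitives on a time scale and existence -/

section Existence

variable {n : ℕ} {T : Set ℝ} {t₀ : ℝ}

/-- The part of the real half-line `[t₀, ∞)` lying below some point of `T`. -/
def tsHull (T : Set ℝ) (t₀ : ℝ) : Set ℝ := {s | t₀ ≤ s ∧ ∃ τ ∈ T, s < τ}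

lemma measurableSet_tsHull (T : Set ℝ) (t₀ : ℝ) : MeasurableSet (tsHull T t₀) := by
  refine Set.OrdConnected.measurableSet ⟨fun x hx y hy z hz => ?_⟩
  obtain ⟨τ, hτ, hyτ⟩ := hy.2
  exact ⟨hx.1.trans hz.1, τ, hτ, hz.2.trans_lt hyτ⟩

/-- The floor map from the hull of `T` to `T` pulls `μ_Δ`-null sets back to Lebesgue null sets. -/
lemma ae_tsFloor (hT : IsClosed T) (hmin : IsLeast T t₀) {P : ℝ → Prop}
    (h : ∀ᵐ t ∂((deltaMeasure T).restrict (tsUpDomain T)), P t) :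
    ∀ᵐ s : ℝ, s ∈ tsHull T t₀ → P (tsFloor T t₀ s) := by
  obtain ⟨h1, h2⟩ := (ae_delta_iff hT (measurableSet_tsUpDomain hT)).1 h
  filter_upwards [h1] with s hs ⟨hs0, τ, hτ, hsτ⟩
  by_cases hsT : s ∈ T
  · rw [tsFloor_self hT hmin hsT]
    exact hs hsT (mem_tsUpDomain hsT hτ hsτ)
  · obtain ⟨h3, h4⟩ := gap_of_notMem hT hmin hs0 hsT hτ hsτ
    have h5 := (tsFloor_mem hT hmin s).1
    have h6 : RightScattered T (tsFloor T t₀ s) := h3.trans h4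
    exact h2 _ h5 h6 (h6.mem_tsUpDomain hT h5)

/-- The coefficient `h`, extended to the real line as a constant on each gap of `T`, and by `0`
outside the hull of `T`. -/
def tsKernel (T : Set ℝ) (t₀ : ℝ)
    (h : ℝ → (EuclideanSpace ℝ (Fin n) →L[ℝ] EuclideanSpace ℝ (Fin n))) (s : ℝ) :
    EuclideanSpace ℝ (Fin n) →L[ℝ] EuclideanSpace ℝ (Fin n) :=
  (tsHull T t₀).indicator (fun s => h (tsFloor T t₀ s)) s

variable {h : ℝ → (EuclideanSpace ℝ (Fin n) →L[ℝ] EuclideanSpace ℝ (Fin n))} {C : ℝ}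

lemma tsKernel_of_mem {s : ℝ} (hs : s ∈ tsHull T t₀) :
    tsKernel T t₀ h s = h (tsFloor T t₀ s) := indicator_of_mem hs _

lemma aestronglyMeasurable_tsKernel (hT : IsClosed T) (hmin : IsLeast T t₀)
    (hmeas : AEStronglyMeasurable h ((deltaMeasure T).restrict (tsUpDomain T))) :
    AEStronglyMeasurable (tsKernel T t₀ h) volume := by
  refine ⟨(tsHull T t₀).indicator (hmeas.mk h ∘ tsFloor T t₀),
    (hmeas.stronglyMeasurable_mk.comp_measurable (tsFloor_mono hT hmin).measurable).indicator
      (measurableSet_tsHull T t₀), ?_⟩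
  filter_upwards [ae_tsFloor hT hmin hmeas.ae_eq_mk] with s hs
  by_cases hsD : s ∈ tsHull T t₀
  · rw [tsKernel_of_mem hsD, indicator_of_mem hsD, hs hsD]
    rfl
  · rw [tsKernel, indicator_of_notMem hsD, indicator_of_notMem hsD]

lemma ae_norm_tsKernel_le (hT : IsClosed T) (hmin : IsLeast T t₀) (hC : 0 ≤ C)
    (hbd : ∀ᵐ t ∂((deltaMeasure T).restrict (tsUpDomain T)), ‖h t‖ ≤ C) :
    ∀ᵐ s, ‖tsKernel T t₀ h s‖ ≤ C := by
  filter_upwards [ae_tsFloor hT hmin hbd] with s hs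
  by_cases hsD : s ∈ tsHull T t₀
  · rw [tsKernel_of_mem hsD]
    exact hs hsD
  · rw [tsKernel, indicator_of_notMem hsD, norm_zero]
    exact hC

lemma hasDeltaDerivAt_of_rightScattered {q : ℝ → EuclideanSpace ℝ (Fin n)}
    {q' : EuclideanSpace ℝ (Fin n)} {t : ℝ} (ht : RightScattered T t) (hq : ContinuousAt q t)
    (heq : q (tsSigma T t) = q t + (tsSigma T t - t) • q') : HasDeltaDerivAt T q q' t := by
  intro ε hε
  have h1 : ContinuousAt (fun s => ‖q (tsSigma T t) - q s - (tsSigma T t - s) • q'‖) t := by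
    fun_prop
  have h2 : ContinuousAt (fun s => ε * |tsSigma T t - s|) t := by fun_prop
  have h3 : ∀ᶠ s in nhds t, ‖q (tsSigma T t) - q s - (tsSigma T t - s) • q'‖ <
      ε * |tsSigma T t - s| := by
    refine h1.eventually_lt h2 ?_
    have : 0 < tsSigma T t - t := sub_pos.2 ht
    rw [heq, add_sub_cancel_left, sub_self, norm_zero]
    positivity
  exact ⟨_, h3, fun s hs => le_of_lt hs.1⟩

/-- The integral of the kernel along `Q`, with initial value `c`. On `T` it is the `Δ`-primitive
of `t ↦ h t (Q t)` with value `c` at `t₀`. -/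
def tsPrimitive (T : Set ℝ) (t₀ : ℝ)
    (h : ℝ → (EuclideanSpace ℝ (Fin n) →L[ℝ] EuclideanSpace ℝ (Fin n)))
    (Q : ℝ → EuclideanSpace ℝ (Fin n)) (c : EuclideanSpace ℝ (Fin n)) (t : ℝ) :
    EuclideanSpace ℝ (Fin n) :=
  c + ∫ s in t₀..t, tsKernel T t₀ h s (Q (tsFloor T t₀ s))

lemma locallyIntegrable_tsKernel (hT : IsClosed T) (hmin : IsLeast T t₀)
    (hmeas : AEStronglyMeasurable h ((deltaMeasure T).restrict (tsUpDomain T)))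
    (hC : 0 ≤ C) (hbd : ∀ᵐ t ∂((deltaMeasure T).restrict (tsUpDomain T)), ‖h t‖ ≤ C)
    {Q : ℝ → EuclideanSpace ℝ (Fin n)} (hQ : Continuous Q) :
    LocallyIntegrable (fun s => tsKernel T t₀ h s (Q (tsFloor T t₀ s))) volume :=
  locallyIntegrable_kernel (aestronglyMeasurable_tsKernel hT hmin hmeas)
    (ae_norm_tsKernel_le hT hmin hC hbd) (tsFloor_mono hT hmin) hQ

lemma intervalIntegrable_tsKernel (hT : IsClosed T) (hmin : IsLeast T t₀)
    (hmeas : AEStronglyMeasurable h ((deltaMeasure T).restrict (tsUpDomain T)))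
    (hC : 0 ≤ C) (hbd : ∀ᵐ t ∂((deltaMeasure T).restrict (tsUpDomain T)), ‖h t‖ ≤ C)
    {Q : ℝ → EuclideanSpace ℝ (Fin n)} (hQ : Continuous Q) (u v : ℝ) :
    IntervalIntegrable (fun s => tsKernel T t₀ h s (Q (tsFloor T t₀ s))) volume u v :=
  intervalIntegrable_iff.mpr <| ((locallyIntegrable_tsKernel hT hmin hmeas hC hbd hQ
    ).integrableOn_isCompact isCompact_uIcc).mono_set uIoc_subset_uIcc

lemma tsPrimitive_sub (hT : IsClosed T) (hmin : IsLeast T t₀)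
    (hmeas : AEStronglyMeasurable h ((deltaMeasure T).restrict (tsUpDomain T)))
    (hC : 0 ≤ C) (hbd : ∀ᵐ t ∂((deltaMeasure T).restrict (tsUpDomain T)), ‖h t‖ ≤ C)
    {Q : ℝ → EuclideanSpace ℝ (Fin n)} (hQ : Continuous Q) (c : EuclideanSpace ℝ (Fin n))
    (u v : ℝ) : tsPrimitive T t₀ h Q c v - tsPrimitive T t₀ h Q c u
      = ∫ s in u..v, tsKernel T t₀ h s (Q (tsFloor T t₀ s)) := by
  have hint := intervalIntegrable_tsKernel hT hmin hmeas hC hbd hQ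
  rw [tsPrimitive, tsPrimitive, add_sub_add_left_eq_sub,
    intervalIntegral.integral_interval_sub_left (hint _ _) (hint _ _)]

lemma continuous_tsPrimitive (hT : IsClosed T) (hmin : IsLeast T t₀)
    (hmeas : AEStronglyMeasurable h ((deltaMeasure T).restrict (tsUpDomain T)))
    (hC : 0 ≤ C) (hbd : ∀ᵐ t ∂((deltaMeasure T).restrict (tsUpDomain T)), ‖h t‖ ≤ C)
    {Q : ℝ → EuclideanSpace ℝ (Fin n)} (hQ : Continuous Q) (c : EuclideanSpace ℝ (Fin n)) :
    Continuous (tsPrimitive T t₀ h Q c) :=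
  continuous_const.add (intervalIntegral.continuous_primitive
    (intervalIntegrable_tsKernel hT hmin hmeas hC hbd hQ) t₀)

/-- On compact intervals the primitive is even Lipschitz. -/
lemma deltaAC_tsPrimitive (hT : IsClosed T) (hmin : IsLeast T t₀)
    (hmeas : AEStronglyMeasurable h ((deltaMeasure T).restrict (tsUpDomain T)))
    (hC : 0 ≤ C) (hbd : ∀ᵐ t ∂((deltaMeasure T).restrict (tsUpDomain T)), ‖h t‖ ≤ C)
    {Q : ℝ → EuclideanSpace ℝ (Fin n)} (hQ : Continuous Q) (c : EuclideanSpace ℝ (Fin n))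
    {b : ℝ} (hb0 : t₀ ≤ b) : DeltaAC T t₀ b (tsPrimitive T t₀ h Q c) := by
  obtain ⟨B, hB⟩ := (isCompact_Icc (a := t₀) (b := b)).exists_bound_of_continuousOn
    hQ.continuousOn
  have hB0 : 0 ≤ B := (norm_nonneg _).trans (hB t₀ ⟨le_rfl, hb0⟩)
  have hLip : ∀ u v, t₀ ≤ u → u ≤ v → v ≤ b →
      ‖tsPrimitive T t₀ h Q c v - tsPrimitive T t₀ h Q c u‖ ≤ C * B * (v - u) := by
    intro u v hu huv hv
    rw [tsPrimitive_sub hT hmin hmeas hC hbd hQ]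
    refine (intervalIntegral.norm_integral_le_of_norm_le (g := fun _ => C * B) huv ?_
      (by simp)).trans (by
        rw [intervalIntegral.integral_const, smul_eq_mul, mul_comm])
    filter_upwards [ae_norm_tsKernel_le hT hmin hC hbd] with s hs hsm
    refine (ContinuousLinearMap.le_opNorm _ _).trans ?_
    have h2 : t₀ ≤ s := hu.trans hsm.1.le
    have := hB (tsFloor T t₀ s) ⟨tsFloor_ge hmin s,
      (tsFloor_le hT hmin h2).trans (hsm.2.trans hv)⟩
    gcongr
  intro ε hε
  refine ⟨ε / (C * B + 1), by positivity, fun m u v hu hv huv _ hsum => ?_⟩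
  rw [lt_div_iff₀ (by positivity)] at hsum
  have h0 : 0 ≤ ∑ k ∈ Finset.range m, (v k - u k) :=
    Finset.sum_nonneg fun k hk => sub_nonneg.2 (huv k (Finset.mem_range.1 hk))
  calc _ ≤ ∑ k ∈ Finset.range m, C * B * (v k - u k) :=
        Finset.sum_le_sum fun k hk => by
          rw [Finset.mem_range] at hk
          exact hLip _ _ (hu k hk).1.1 (huv k hk) (hv k hk).1.2
    _ = C * B * ∑ k ∈ Finset.range m, (v k - u k) := by rw [Finset.mul_sum]
    _ < ε := by nlinarith

lemma ae_hasDeltaDerivAt_tsPrimitive (hT : IsClosed T) (hmin : IsLeast T t₀)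
    (hmeas : AEStronglyMeasurable h ((deltaMeasure T).restrict (tsUpDomain T)))
    (hC : 0 ≤ C) (hbd : ∀ᵐ t ∂((deltaMeasure T).restrict (tsUpDomain T)), ‖h t‖ ≤ C)
    {Q : ℝ → EuclideanSpace ℝ (Fin n)} (hQ : Continuous Q) (c : EuclideanSpace ℝ (Fin n))
    {b : ℝ} (hb : b ∈ T) :
    ∀ᵐ t ∂((deltaMeasure T).restrict (Ico t₀ b ∩ T)),
      HasDeltaDerivAt T (tsPrimitive T t₀ h Q c) (h t (Q t)) t := by
  have hcase : ∀ t ∈ T, t < b → tsKernel T t₀ h t (Q (tsFloor T t₀ t)) = h t (Q t) := by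
    intro t ht htb
    rw [tsKernel_of_mem ⟨hmin.2 ht, b, hb, htb⟩, tsFloor_self hT hmin ht]
  -- on the gap following a right-scattered point the integrand is constant
  have hsc : ∀ t ∈ T, RightScattered T t → t ∈ Ico t₀ b ∩ T →
      HasDeltaDerivAt T (tsPrimitive T t₀ h Q c) (h t (Q t)) t := by
    intro t ht hs hts
    refine hasDeltaDerivAt_of_rightScattered hs
      (continuous_tsPrimitive hT hmin hmeas hC hbd hQ c).continuousAt ?_
    rw [← sub_eq_iff_eq_add', tsPrimitive_sub hT hmin hmeas hC hbd hQ]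
    have h1 : ∫ s in t..tsSigma T t, tsKernel T t₀ h s (Q (tsFloor T t₀ s))
        = ∫ s in t..tsSigma T t, h t (Q t) := by
      refine intervalIntegral.integral_congr_ae ?_
      have h2 : ∀ᵐ s : ℝ, s ≠ tsSigma T t := by simp [ae_iff]
      filter_upwards [h2] with s hs2 hsm
      rw [uIoc_of_le hs.le] at hsm
      have hslt : s < tsSigma T t := lt_of_le_of_ne hsm.2 hs2
      have h3 := tsFloor_eq_of_gap hT hmin ht hsm.1.le hslt
      rw [tsKernel_of_mem ⟨(hmin.2 ht).trans hsm.1.le, _, tsSigma_mem hT hs, hslt⟩, h3]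
    rw [h1]
    simp
  refine (ae_delta_iff hT (measurableSet_Ico.inter hT.measurableSet)).2 ⟨?_, hsc⟩
  filter_upwards [LocallyIntegrable.ae_hasDerivAt_integral
    (locallyIntegrable_tsKernel hT hmin hmeas hC hbd hQ)] with t hd ht hts
  by_cases hs : RightScattered T t
  · exact hsc t ht hs hts
  have hst : tsSigma T t = t := le_antisymm (not_lt.1 hs) (le_tsSigma T t)
  have hd' := hd t₀
  rw [hcase t ht hts.1.2, hasDerivAt_iff_isLittleO, Asymptotics.isLittleO_iff] at hd'
  intro ε hε
  refine ⟨_, hd' hε, fun s hs => ?_⟩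
  have h1 := hs.1
  rw [hst, norm_sub_rev, abs_sub_comm, tsPrimitive, tsPrimitive, add_sub_add_left_eq_sub]
  simp only [mem_ofPred_eq, Real.norm_eq_abs] at h1
  convert! h1 using 2
  module

lemma HasDeltaDerivAt.congr {q p : ℝ → EuclideanSpace ℝ (Fin n)}
    {q' : EuclideanSpace ℝ (Fin n)} {t : ℝ} (hq : HasDeltaDerivAt T q q' t)
    (hT : IsClosed T) (ht : t ∈ T) (hpq : EqOn p q T) : HasDeltaDerivAt T p q' t := by
  have h1 : tsSigma T t ∈ T := by
    by_cases hs : RightScattered T t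
    · exact tsSigma_mem hT hs
    · rwa [le_antisymm (not_lt.1 hs) (le_tsSigma T t)]
  intro ε hε
  obtain ⟨U, hU, h2⟩ := hq ε hε
  exact ⟨U, hU, fun s hs => by rw [hpq h1, hpq hs.2]; exact h2 s hs⟩

lemma HasDeltaDerivAt.sub {q p : ℝ → EuclideanSpace ℝ (Fin n)}
    {q' p' : EuclideanSpace ℝ (Fin n)} {t : ℝ} (hq : HasDeltaDerivAt T q q' t)
    (hp : HasDeltaDerivAt T p p' t) : HasDeltaDerivAt T (fun s => q s - p s) (q' - p') t := by
  intro ε hε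
  obtain ⟨U, hU, h1⟩ := hq (ε / 2) (by positivity)
  obtain ⟨V, hV, h2⟩ := hp (ε / 2) (by positivity)
  refine ⟨U ∩ V, inter_mem hU hV, fun s hs => ?_⟩
  have h3 := h1 s ⟨hs.1.1, hs.2⟩
  have h4 := h2 s ⟨hs.1.2, hs.2⟩
  calc _ = ‖(q (tsSigma T t) - q s - (tsSigma T t - s) • q') -
        (p (tsSigma T t) - p s - (tsSigma T t - s) • p')‖ := by congr 1; module
    _ ≤ _ := (norm_sub_le _ _).trans (by linarith)

lemma exists_global_solution (hT : IsClosed T) (hmin : IsLeast T t₀)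
    (q₀ : EuclideanSpace ℝ (Fin n))
    (hmeas : AEStronglyMeasurable h ((deltaMeasure T).restrict (tsUpDomain T)))
    (hC : 0 ≤ C) (hbd : ∀ᵐ t ∂((deltaMeasure T).restrict (tsUpDomain T)), ‖h t‖ ≤ C) :
    ∃ Q : ℝ → EuclideanSpace ℝ (Fin n), Q t₀ = q₀ ∧
      ∀ b ∈ T, t₀ < b → IsSolIcc T univ (fun x t => h t x) t₀ q₀ Q t₀ b := by
  obtain ⟨Q, hQc, hQ⟩ := exists_volterra hC (aestronglyMeasurable_tsKernel hT hmin hmeas)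
    (ae_norm_tsKernel_le hT hmin hC hbd) (tsFloor_mono hT hmin)
    (fun s hs => tsFloor_le hT hmin hs) q₀
  have hPQ : ∀ t, t₀ ≤ t → tsPrimitive T t₀ h Q q₀ t = Q t := fun t ht => (hQ t ht).symm
  have h0 : tsPrimitive T t₀ h Q q₀ t₀ = q₀ := by simp [tsPrimitive]
  refine ⟨tsPrimitive T t₀ h Q q₀, h0, fun b hb hb0 => ⟨fun _ _ => mem_univ _,
    deltaAC_tsPrimitive hT hmin hmeas hC hbd hQc q₀ hb0.le, h0, ?_⟩⟩
  filter_upwards [ae_hasDeltaDerivAt_tsPrimitive hT hmin hmeas hC hbd hQc q₀ hb,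
    ae_restrict_mem (measurableSet_Ico.inter hT.measurableSet)] with t ht htm
  rwa [hPQ t htm.1.1]

end Existence

/-! ### Uniqueness -/

section Uniqueness

variable {n : ℕ} {T : Set ℝ} {t₀ b : ℝ}

lemma HasDeltaDerivAt.eq_of_rightScattered {q : ℝ → EuclideanSpace ℝ (Fin n)} {t : ℝ}
    (hq : HasDeltaDerivAt T q 0 t) (ht : t ∈ T) (hs : RightScattered T t) :
    q (tsSigma T t) = q t := by
  have h0 : 0 < tsSigma T t - t := sub_pos.2 hs
  rw [← sub_eq_zero, ← norm_le_zero_iff]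
  refine le_of_forall_pos_le_add fun ε hε => ?_
  obtain ⟨U, hU, h⟩ := hq (ε / (tsSigma T t - t)) (by positivity)
  have := h t ⟨mem_of_mem_nhds hU, ht⟩
  rw [abs_of_pos h0, div_mul_cancel₀ _ h0.ne', smul_zero, sub_zero] at this
  linarith

/-- A point `u` may be pushed to the right into `T` without changing the value of the step
extension of a function that takes the same value at both ends of each gap. -/
lemma exists_ceil (hT : IsClosed T) (hmin : IsLeast T t₀) (hb : b ∈ T)
    {Y : ℝ → EuclideanSpace ℝ (Fin n)}
    (hY : ∀ p ∈ T, RightScattered T p → p ∈ Ico t₀ b → Y (tsSigma T p) = Y p)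
    {u : ℝ} (hu : u ∈ Icc t₀ b) :
    ∃ u' ∈ T, u ≤ u' ∧ (∀ x ∈ T, u ≤ x → u' ≤ x) ∧ Y u' = Y (tsFloor T t₀ u) := by
  by_cases huT : u ∈ T
  · exact ⟨u, huT, le_rfl, fun _ _ h => h, by rw [tsFloor_self hT hmin huT]⟩
  have hub : u < b := lt_of_le_of_ne hu.2 fun h => huT (h ▸ hb)
  obtain ⟨h1, h2⟩ := gap_of_notMem hT hmin hu.1 huT hb hub
  have hs : RightScattered T (tsFloor T t₀ u) := h1.trans h2
  exact ⟨_, tsSigma_mem hT hs, h2.le, fun x hx hux => tsSigma_le hx (h1.trans_le hux),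
    hY _ (tsFloor_mem hT hmin u).1 hs ⟨tsFloor_ge hmin u, h1.trans hub⟩⟩

/-- If `Y` takes the same value at both ends of each gap, its step extension inherits absolute
continuity, now over real intervals. -/
lemma absolutelyContinuous_step (hT : IsClosed T) (hmin : IsLeast T t₀) (hb : b ∈ T)
    {Y : ℝ → EuclideanSpace ℝ (Fin n)} (hac : DeltaAC T t₀ b Y)
    (hY : ∀ p ∈ T, RightScattered T p → p ∈ Ico t₀ b → Y (tsSigma T p) = Y p) :
    AbsolutelyContinuousOnInterval (fun s => Y (tsFloor T t₀ s)) t₀ b := by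
  have hb0 : t₀ ≤ b := hmin.2 hb
  have hmono := tsFloor_mono hT hmin
  set Z : ℝ → EuclideanSpace ℝ (Fin n) := fun s => Y (tsFloor T t₀ s) with hZ
  -- an increment of the step extension is the increment of `Y` over a smaller interval
  have key : ∀ u ∈ Icc t₀ b, ∀ v ∈ Icc t₀ b, u ≤ v → Z u ≠ Z v → ∃ u' v', u' ∈ Icc t₀ b ∩ T ∧
      v' ∈ Icc t₀ b ∩ T ∧ u' < v' ∧ u ≤ u' ∧ v' ≤ v ∧ Z u = Y u' ∧ Z v = Y v' := by
    intro u hu v hv huv hne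
    obtain ⟨u', hu'T, huu', hleast, hYu⟩ := exists_ceil hT hmin hb hY hu
    have hvT := (tsFloor_mem hT hmin v).1
    have hvv := tsFloor_le hT hmin hv.1
    have hlt : u' < tsFloor T t₀ v := by
      by_contra! hle
      by_cases huv' : u ≤ tsFloor T t₀ v
      · have := le_antisymm hle (hleast _ hvT huv')
        exact hne (by rw [hZ]; simp only [← hYu, this])
      · have h1 : tsFloor T t₀ v ≤ tsFloor T t₀ u :=
          le_tsFloor hvT ((not_le.1 huv').le.trans (le_max_left _ _))
        exact hne (by rw [hZ]; simp only [le_antisymm h1 (hmono huv)])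
    have hvb : tsFloor T t₀ v ≤ b := hvv.trans hv.2
    exact ⟨u', tsFloor T t₀ v, ⟨⟨hmin.2 hu'T, hlt.le.trans hvb⟩, hu'T⟩,
      ⟨⟨hmin.2 hvT, hvb⟩, hvT⟩, hlt, huu', hvv, hYu.symm, rfl⟩
  rw [absolutelyContinuousOnInterval_iff]
  intro ε hε
  obtain ⟨δ, hδ, h⟩ := hac.finset_Ioc ε hε
  refine ⟨δ, hδ, ?_⟩
  rintro ⟨m, I⟩ ⟨hmem, hdisj⟩ hlen
  simp only [uIcc_of_le hb0, Finset.mem_range] at hmem hdisj hlen ⊢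
  have hch : ∀ k, ∃ p : ℝ × ℝ, k < m → Z (I k).1 ≠ Z (I k).2 →
      p.1 ∈ Icc t₀ b ∩ T ∧ p.2 ∈ Icc t₀ b ∩ T ∧ p.1 < p.2 ∧
      Ioc p.1 p.2 ⊆ uIoc (I k).1 (I k).2 ∧ p.2 - p.1 ≤ dist (I k).1 (I k).2 ∧
      dist (Z (I k).1) (Z (I k).2) = ‖Y p.2 - Y p.1‖ := by
    intro k
    by_cases hk : k < m ∧ Z (I k).1 ≠ Z (I k).2
    swap
    · exact ⟨0, fun h1 h2 => absurd ⟨h1, h2⟩ hk⟩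
    obtain ⟨hkm, hne⟩ := hk
    obtain ⟨h1, h2⟩ := hmem k hkm
    rcases le_total (I k).1 (I k).2 with hle | hle
    · obtain ⟨u', v', a1, a2, a3, a4, a5, a6, a7⟩ := key _ h1 _ h2 hle hne
      refine ⟨(u', v'), fun _ _ => ⟨a1, a2, a3, ?_, ?_, ?_⟩⟩
      · rw [uIoc_of_le hle]; exact Ioc_subset_Ioc a4 a5
      · rw [dist_comm, Real.dist_eq, abs_of_nonneg (sub_nonneg.2 hle)]; dsimp only; linarith
      · rw [a6, a7, dist_comm, dist_eq_norm]
    · obtain ⟨u', v', a1, a2, a3, a4, a5, a6, a7⟩ := key _ h2 _ h1 hle hne.symm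
      refine ⟨(u', v'), fun _ _ => ⟨a1, a2, a3, ?_, ?_, ?_⟩⟩
      · rw [uIoc_of_ge hle]; exact Ioc_subset_Ioc a4 a5
      · rw [Real.dist_eq, abs_of_nonneg (sub_nonneg.2 hle)]; dsimp only; linarith
      · rw [a6, a7, dist_eq_norm]
  choose p hp using hch
  set s := (Finset.range m).filter fun k => Z (I k).1 ≠ Z (I k).2 with hs
  have hsp : ∀ k ∈ s, k < m ∧ Z (I k).1 ≠ Z (I k).2 := fun k hk => by simpa [hs] using hk
  have hfin := h s (fun k => (p k).1) (fun k => (p k).2)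
    (fun k hk => by
      obtain ⟨a1, a2, a3, -⟩ := hp k (hsp k hk).1 (hsp k hk).2
      exact ⟨a1, a2, a3⟩)
    (fun i hi j hj hij => by
      have h1 := (hp i (hsp i hi).1 (hsp i hi).2).2.2.2.1
      have h2 := (hp j (hsp j hj).1 (hsp j hj).2).2.2.2.1
      exact (hdisj (by simpa using (hsp i hi).1) (by simpa using (hsp j hj).1) hij).mono h1 h2)
    ((Finset.sum_le_sum fun k hk => (hp k (hsp k hk).1 (hsp k hk).2).2.2.2.2.1).trans_lt
      ((Finset.sum_le_sum_of_subset_of_nonneg (Finset.filter_subset _ _)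
        fun k _ _ => dist_nonneg).trans_lt hlen))
  calc _ = ∑ k ∈ s, dist (Z (I k).1) (Z (I k).2) :=
        (Finset.sum_filter_of_ne fun k _ hk => by
          intro heq
          exact hk (by simp [heq])).symm
    _ = ∑ k ∈ s, ‖Y (p k).2 - Y (p k).1‖ :=
        Finset.sum_congr rfl fun k hk => (hp k (hsp k hk).1 (hsp k hk).2).2.2.2.2.2
    _ < ε := hfin

/-- An absolutely continuous function on a time scale with vanishing `Δ`-derivative is constant:
its step extension is absolutely continuous on a real interval and has derivative `0` a.e. -/
lemma eq_of_deltaDeriv_zero (hT : IsClosed T) (hmin : IsLeast T t₀) (hb : b ∈ T)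
    {Y : ℝ → EuclideanSpace ℝ (Fin n)} (hac : DeltaAC T t₀ b Y)
    (hd : ∀ᵐ t ∂((deltaMeasure T).restrict (Ico t₀ b ∩ T)), HasDeltaDerivAt T Y 0 t) :
    ∀ t ∈ Icc t₀ b ∩ T, Y t = Y t₀ := by
  have hb0 : t₀ ≤ b := hmin.2 hb
  obtain ⟨hd1, hd2⟩ := (ae_delta_iff hT (measurableSet_Ico.inter hT.measurableSet)).1 hd
  have hac' := absolutelyContinuous_step hT hmin hb hac
    fun p hp hs hpb => (hd2 p hp hs ⟨hpb, hp⟩).eq_of_rightScattered hp hs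
  have hder : ∀ᵐ s : ℝ, s ∈ uIcc t₀ b → HasDerivAt (fun s => Y (tsFloor T t₀ s)) 0 s := by
    have h1 : ∀ᵐ s : ℝ, s ≠ b := by simp [ae_iff]
    have h2 := (countable_rightScattered T).ae_notMem volume
    filter_upwards [hac'.boundedVariationOn.ae_differentiableAt_of_mem_uIcc, hd1, h1, h2]
      with s hdiff hs hsb hsc hsI
    have hdiff := hdiff hsI
    rw [uIcc_of_le hb0] at hsI
    have hlt : s < b := lt_of_le_of_ne hsI.2 hsb
    by_cases hsT : s ∈ T
    -- the derivative exists, so it may be computed along `T`, which accumulates at `s`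
    · have hrd : ¬ RightScattered T s := fun h => hsc ⟨hsT, h⟩
      have hσ : tsSigma T s = s := le_antisymm (not_lt.1 hrd) (le_tsSigma T s)
      have hw : HasDerivWithinAt (fun s => Y (tsFloor T t₀ s)) 0 T s := by
        rw [hasDerivWithinAt_iff_isLittleO, Asymptotics.isLittleO_iff]
        intro ε hε
        obtain ⟨U, hU, h3⟩ := hs hsT ⟨⟨hsI.1, hlt⟩, hsT⟩ ε hε
        filter_upwards [mem_nhdsWithin_of_mem_nhds hU, self_mem_nhdsWithin] with x hxU hxT
        have := h3 x ⟨hxU, hxT⟩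
        rw [hσ, smul_zero, sub_zero] at this
        rw [tsFloor_self hT hmin hxT, tsFloor_self hT hmin hsT, smul_zero, sub_zero, norm_sub_rev,
          Real.norm_eq_abs, abs_sub_comm]
        exact this
      have huniq : UniqueDiffWithinAt ℝ T s := (accPt_of_rightDense hb hlt hrd).uniqueDiffWithinAt
      have := huniq.eq_deriv _ hdiff.hasDerivAt.hasDerivWithinAt hw
      rw [← this]
      exact hdiff.hasDerivAt
    · obtain ⟨h3, h4⟩ := gap_of_notMem hT hmin hsI.1 hsT hb hlt
      refine (hasDerivAt_const s (Y (tsFloor T t₀ s))).congr_of_eventuallyEq ?_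
      filter_upwards [Ioo_mem_nhds h3 h4] with x hx
      rw [tsFloor_eq_of_gap hT hmin (tsFloor_mem hT hmin s).1 hx.1.le hx.2]
  obtain ⟨c, hc⟩ := hac'.const_of_ae_hasDerivAt_zero hder
  have hval : ∀ t ∈ Icc t₀ b ∩ T, Y t = c := fun t ht => by
    rw [← hc t (by rw [uIcc_of_le hb0]; exact ht.1), tsFloor_self hT hmin ht.2]
  intro t ht
  rw [hval t ht, hval t₀ ⟨⟨le_rfl, hb0⟩, hmin.1⟩]

/-- The difference `w` of two solutions is the `Δ`-primitive of `h w`, hence coincides on `T` with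
a continuous function to which the weighted Gronwall argument applies. -/
lemma eqOn_of_isSolIcc {h : ℝ → (EuclideanSpace ℝ (Fin n) →L[ℝ] EuclideanSpace ℝ (Fin n))}
    {C : ℝ} {q₀ : EuclideanSpace ℝ (Fin n)} {q₁ q₂ : ℝ → EuclideanSpace ℝ (Fin n)}
    (hT : IsClosed T) (hmin : IsLeast T t₀)
    (hmeas : AEStronglyMeasurable h ((deltaMeasure T).restrict (tsUpDomain T)))
    (hC : 0 ≤ C) (hbd : ∀ᵐ t ∂((deltaMeasure T).restrict (tsUpDomain T)), ‖h t‖ ≤ C)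
    (hb : b ∈ T) (h1 : IsSolIcc T univ (fun x t => h t x) t₀ q₀ q₁ t₀ b)
    (h2 : IsSolIcc T univ (fun x t => h t x) t₀ q₀ q₂ t₀ b) : EqOn q₁ q₂ (Icc t₀ b ∩ T) := by
  obtain ⟨-, hac1, h10, hd1⟩ := h1
  obtain ⟨-, hac2, h20, hd2⟩ := h2
  have hb0 : t₀ ≤ b := hmin.2 hb
  set w : ℝ → EuclideanSpace ℝ (Fin n) := fun t => q₁ t - q₂ t with hw
  have hacw : DeltaAC T t₀ b w := hac1.sub hac2
  have : TietzeExtension (EuclideanSpace ℝ (Fin n)) := TietzeExtension.of_tvs ℝ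
  -- `w` is arbitrary off `T`, while the primitive is taken along a continuous function
  obtain ⟨Q, hQ⟩ := ContinuousMap.exists_restrict_eq (isClosed_Icc.inter hT)
    ⟨_, hacw.continuousOn.domRestrict⟩
  have hQw : ∀ t ∈ Icc t₀ b ∩ T, Q t = w t := fun t ht => DFunLike.congr_fun hQ ⟨t, ht⟩
  set P := tsPrimitive T t₀ h Q 0 with hP
  have hP0 : P t₀ = 0 := by simp [hP, tsPrimitive]
  -- both `w` and `P` have the `Δ`-derivative `h w`
  have hwP : ∀ t ∈ Icc t₀ b ∩ T, w t = P t := by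
    intro t ht
    have := eq_of_deltaDeriv_zero hT hmin hb
      (hacw.sub (deltaAC_tsPrimitive hT hmin hmeas hC hbd Q.continuous 0 hb0)) (by
        filter_upwards [hd1, hd2, ae_hasDeltaDerivAt_tsPrimitive hT hmin hmeas hC hbd
          Q.continuous 0 hb, ae_restrict_mem (measurableSet_Ico.inter hT.measurableSet)]
          with s hs1 hs2 hs3 hsm
        convert! (hs1.sub hs2).sub hs3 using 1
        rw [hQw s ⟨Ico_subset_Icc_self hsm.1, hsm.2⟩, hw]
        simp) t ht
    have hw0 : w t₀ = 0 := by simp [hw, h10, h20]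
    simp only [← hP, hP0, hw0, sub_zero] at this
    exact sub_eq_zero.1 this
  have hPz := eq_zero_of_weighted (W := P) (b := b) (t₀ := t₀) hC
    (continuous_tsPrimitive hT hmin hmeas hC hbd Q.continuous 0).continuousOn (by
      intro S hS t ht
      have hS0 : 0 ≤ S := by
        simpa using (norm_nonneg _).trans (hS t₀ ⟨le_rfl, hb0⟩)
      rw [hP, tsPrimitive, zero_add]
      refine intervalIntegral.norm_integral_le_of_norm_le ht.1 ?_
        (Continuous.intervalIntegrable (by fun_prop) _ _)
      filter_upwards [ae_norm_tsKernel_le hT hmin hC hbd] with s hs hsm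
      have hsle := tsFloor_le hT hmin hsm.1.le
      have hfm : tsFloor T t₀ s ∈ Icc t₀ b :=
        ⟨tsFloor_ge hmin s, hsle.trans (hsm.2.trans ht.2)⟩
      have hfT := (tsFloor_mem hT hmin s).1
      refine (ContinuousLinearMap.le_opNorm _ _).trans ?_
      rw [hQw _ ⟨hfm, hfT⟩, hwP _ ⟨hfm, hfT⟩]
      have := hS _ hfm
      have h3 : S * Real.exp ((2 * C + 1) * (tsFloor T t₀ s - t₀)) ≤
          S * Real.exp ((2 * C + 1) * (s - t₀)) := by gcongr
      have h4 := this.trans h3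
      gcongr)
  intro t ht
  have := hwP t ht
  rw [hPz t ht.1] at this
  exact sub_eq_zero.1 this

end Uniqueness

theorem stmt19 {n : ℕ} (T : Set ℝ) (hTclosed : IsClosed T) (hTnontriv : T.Nontrivial)
    (t₀ : ℝ) (hmin : IsLeast T t₀) (q₀ : EuclideanSpace ℝ (Fin n))
    (h : ℝ → (EuclideanSpace ℝ (Fin n) →L[ℝ] EuclideanSpace ℝ (Fin n)))
    (hmeas : AEStronglyMeasurable h ((deltaMeasure T).restrict (tsUpDomain T)))
    (hbd : ∃ C : ℝ, ∀ᵐ t ∂((deltaMeasure T).restrict (tsUpDomain T)), ‖h t‖ ≤ C) :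
    ∃ (q : ℝ → EuclideanSpace ℝ (Fin n)) (I : Set ℝ),
      IsMaxSol T univ (fun x t => h t x) t₀ q₀ q I ∧
      (∀ q₁ I₁, IsMaxSol T univ (fun x t => h t x) t₀ q₀ q₁ I₁ →
        I₁ ∩ T = I ∩ T ∧ EqOn q₁ q (I ∩ T)) ∧
      I ∩ T = T := by
  obtain ⟨C₀, hC₀⟩ := hbd
  have hC : (0 : ℝ) ≤ max C₀ 0 := le_max_right _ _
  have hbd : ∀ᵐ t ∂((deltaMeasure T).restrict (tsUpDomain T)), ‖h t‖ ≤ max C₀ 0 :=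
    hC₀.mono fun t ht => ht.trans (le_max_left _ _)
  obtain ⟨Q, hQ0, hQ⟩ := exists_global_solution hTclosed hmin q₀ hmeas hC hbd
  -- the initial point is the left end of every admissible interval
  have hTri : ∀ a ∈ T, ∀ b, Trile T t₀ a b ↔ a = t₀ ∧ t₀ < b := by
    intro a ha b
    refine ⟨?_, fun hab => Or.inl ⟨hmin, hab.1, hab.2⟩⟩
    rintro (⟨-, h1⟩ | ⟨-, h1, -⟩ | ⟨h1, -⟩)
    · exact h1
    · exact absurd (hmin.2 ha) (not_le.2 h1)
    · exact absurd hmin h1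
  obtain ⟨τ, hτ, hτ0⟩ := hTnontriv.exists_ne t₀
  have hQsol : IsSol T univ (fun x t => h t x) t₀ q₀ Q univ := by
    refine ⟨⟨ordConnected_univ, t₀, ⟨mem_univ _, hmin.1⟩, τ, ⟨mem_univ _, hτ⟩,
      (hTri _ hmin.1 _).2 ⟨rfl, lt_of_le_of_ne (hmin.2 hτ) hτ0.symm⟩⟩,
      fun _ _ => mem_univ _, fun a ha b hb hab => ?_⟩
    obtain ⟨rfl, hb0⟩ := (hTri a ha.2 b).1 hab
    exact hQ b hb.2 hb0
  refine ⟨Q, univ, ⟨hQsol, fun q₁ I₁ _ hext => ?_⟩, fun q₁ I₁ hmax => ?_, univ_inter T⟩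
  · exact Subset.antisymm (inter_subset_inter_left _ (subset_univ _)) hext.1
  · have heq : EqOn Q q₁ (I₁ ∩ T) := by
      obtain ⟨a, ha, c, hc, hac⟩ := hmax.1.1.2
      obtain ⟨rfl, hc0⟩ := (hTri a ha.2 c).1 hac
      intro b hb
      rcases (hmin.2 hb.2).eq_or_lt with rfl | hb0
      · exact (hQ0.trans (hmax.1.2.2 _ ha _ hc hac).2.2.1.symm)
      · exact eqOn_of_isSolIcc hTclosed hmin hmeas hC hbd hb.2 (hQ b hb.2 hb0)
          (hmax.1.2.2 _ ha _ hb ((hTri _ ha.2 _).2 ⟨rfl, hb0⟩)) ⟨⟨hb0.le, le_rfl⟩, hb.2⟩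
    have huniv : univ ∩ T = I₁ ∩ T :=
      hmax.2 Q univ hQsol ⟨inter_subset_inter_left _ (subset_univ _), heq⟩
    exact ⟨huniv.symm, fun t ht => (heq (huniv ▸ ht)).symm⟩

end
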